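/- Let e* ≥ 1, h* ≥ 0, s* ≥ 0 be integers and p := e* + h* + 2s*. Let γ₁,…,γ_p ∈ ℂ satisfy: γ_e ∈ (0,1/2) for 1 ≤ e ≤ e*; γ_h ∈ (1/2,∞) for e* < h ≤ e*+h*; Re γ_s > 1/2 and Im γ_s > 0 for e*+h* < s ≤ p−s*; and γ_{s+s*} = 1 − conj γ_s for e*+h* < s ≤ p−s*. Assume the p complex numbers γ_e² (1 ≤ e ≤ e*), γ_h² (e* < h ≤ e*+h*), γ_s(1−γ_s) and (conj γ_s)(1−conj γ_s) (e*+h* < s ≤ p−s*) are pairwise distinct. Let Γ be the p×p complex matrix with entries Γ_{jj} = γ_j for 1 ≤ j ≤ e*+h*, Γ_{s,s+s*} = γ_s and Γ_{s+s*,s} = γ_{s+s*} for e*+h* < s ≤ p−s*, and all other entries 0; then Γ is invertible, and there exists no matrix A ∈ M_p(ℂ) satisfying both (conj A)·A = I_p and conj(Γ^{−1}+A)·(Γ^{−1}+A) = I_p, where conj denotes the entrywise complex conjugate matrix. -/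

import Mathlib

/-!
Write `B = Γ⁻¹ + A`. Both `A` and `B` being coninvolutory forces `conj Γ = -(B * Γ * A)`, so
`conj Γ * Γ = -(A * Γ * (A * Γ) + A * Γ)` commutes with `A * Γ`. The elliptic basis vector spans an
eigenspace of the diagonal matrix `conj Γ * Γ`, hence is an eigenvector of `A`, `Γ` and `B`. The
eigenvalues `a` of `A` and `γ⁻¹ + a` of `B` have modulus one, so `‖γ⁻¹‖ ≤ 2`, contradicting
`‖γ‖ < 1 / 2`.
-/

open Matrix ComplexConjugate

section Coninvolutory

variable {n R : Type*} [Fintype n]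

theorem mul_apply_of_forall_ne_eq_zero [NonUnitalNonAssocSemiring R] {M : Matrix n n R} {o : n}
    (hM : ∀ j, j ≠ o → M j o = 0) (N : Matrix n n R) (i : n) :
    (N * M) i o = N i o * M o o := by
  rw [mul_apply]
  exact Fintype.sum_eq_single o fun j hj ↦ by rw [hM j hj, mul_zero]

variable [DecidableEq n]

/-- A coninvolutory matrix: the anti-linear map `z ↦ conj (A z)` is an involution, its
fixed-point set being the totally real subspace `conj z = A z`. -/
def IsConinvolutory [CommSemiring R] [StarRing R] (A : Matrix n n R) : Prop :=
  A.map (starRingEnd R) * A = 1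

theorem map_conj_eq_neg_of_isConinvolutory [CommRing R] [StarRing R] {Γ A : Matrix n n R}
    (hΓ : IsUnit Γ) (hA : IsConinvolutory A) (hB : IsConinvolutory (Γ⁻¹ + A)) :
    Γ.map (starRingEnd R) = -((Γ⁻¹ + A) * Γ * A) := by
  have hdet := (isUnit_iff_isUnit_det Γ).mp hΓ
  have hconj : Γ.map (starRingEnd R) * Γ⁻¹.map (starRingEnd R) = 1 := by
    rw [← Matrix.map_mul, mul_nonsing_inv Γ hdet, Matrix.map_one _ (map_zero _) (map_one _)]
  have hsub : Γ⁻¹.map (starRingEnd R) =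
      (Γ⁻¹ + A).map (starRingEnd R) - A.map (starRingEnd R) := by
    rw [Matrix.map_add _ (map_add _), add_sub_cancel_right]
  have hinv : Γ⁻¹.map (starRingEnd R) * ((Γ⁻¹ + A) * Γ * A) = -1 := by
    calc Γ⁻¹.map (starRingEnd R) * ((Γ⁻¹ + A) * Γ * A)
        = (Γ⁻¹ + A).map (starRingEnd R) * (Γ⁻¹ + A) * (Γ * A)
          - (A.map (starRingEnd R) * (Γ⁻¹ * Γ) * A
            + A.map (starRingEnd R) * A * (Γ * A)) := by rw [hsub]; noncomm_ring
      _ = -1 := by rw [hA, hB, nonsing_inv_mul Γ hdet, mul_one, hA]; noncomm_ring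
  calc Γ.map (starRingEnd R)
      = -(Γ.map (starRingEnd R) * (Γ⁻¹.map (starRingEnd R) * ((Γ⁻¹ + A) * Γ * A))) := by
        rw [hinv, mul_neg_one, neg_neg]
    _ = -((Γ⁻¹ + A) * Γ * A) := by rw [← mul_assoc, hconj, one_mul]

theorem commute_mul_map_conj_mul_of_isConinvolutory [CommRing R] [StarRing R]
    {Γ A : Matrix n n R} (hΓ : IsUnit Γ) (hA : IsConinvolutory A)
    (hB : IsConinvolutory (Γ⁻¹ + A)) :
    Commute (A * Γ) (Γ.map (starRingEnd R) * Γ) := by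
  have hquad : Γ.map (starRingEnd R) * Γ = -((1 + A * Γ) * (A * Γ)) := by
    rw [map_conj_eq_neg_of_isConinvolutory hΓ hA hB, add_mul,
      nonsing_inv_mul Γ ((isUnit_iff_isUnit_det Γ).mp hΓ), neg_mul, mul_assoc]
  rw [hquad]
  exact (((Commute.one_right _).add_right (Commute.refl _)).mul_right (Commute.refl _)).neg_right

theorem apply_eq_zero_of_commute_diagonal [CommRing R] [NoZeroDivisors R] {M : Matrix n n R}
    {d : n → R} (h : Commute M (diagonal d)) {i j : n} (hij : d i ≠ d j) : M i j = 0 := by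
  have hentry : M i j * d j = d i * M i j := by
    rw [← mul_diagonal, ← diagonal_mul, h.eq]
  have hmul : (d i - d j) * M i j = 0 := by linear_combination -hentry
  exact (mul_eq_zero.mp hmul).resolve_left (sub_ne_zero.mpr hij)

theorem IsConinvolutory.norm_apply_self_eq_one [RCLike R] {A : Matrix n n R}
    (hA : IsConinvolutory A) {o : n} (ho : ∀ j, j ≠ o → A j o = 0) : ‖A o o‖ = 1 := by
  have hentry : conj (A o o) * A o o = 1 := by
    rw [← one_apply_eq (α := R) o, ← hA, mul_apply_of_forall_ne_eq_zero ho, map_apply]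
  rw [RCLike.conj_mul] at hentry
  exact (pow_eq_one_iff_of_nonneg (norm_nonneg _) two_ne_zero).mp (by exact_mod_cast hentry)

theorem not_exists_isConinvolutory_inv_add [RCLike R] {Γ : Matrix n n R} (hΓ : IsUnit Γ)
    {d : n → R} (hd : Γ.map (starRingEnd R) * Γ = diagonal d) {o : n}
    (hcol : ∀ j, j ≠ o → Γ j o = 0) (hne : ∀ j, j ≠ o → d j ≠ d o) (hnorm : ‖Γ o o‖ < 1 / 2) :
    ¬ ∃ A : Matrix n n R, IsConinvolutory A ∧ IsConinvolutory (Γ⁻¹ + A) := by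
  rintro ⟨A, hA, hB⟩
  have hinv (i : n) : Γ⁻¹ i o * Γ o o = (1 : Matrix n n R) i o := by
    rw [← mul_apply_of_forall_ne_eq_zero hcol,
      nonsing_inv_mul Γ ((isUnit_iff_isUnit_det Γ).mp hΓ)]
  have hinv_self : Γ⁻¹ o o * Γ o o = 1 := (hinv o).trans (one_apply_eq o)
  have hΓo : Γ o o ≠ 0 := right_ne_zero_of_mul_eq_one hinv_self
  have hinv_col (j : n) (hj : j ≠ o) : Γ⁻¹ j o = 0 :=
    (mul_eq_zero.mp ((hinv j).trans (one_apply_ne hj))).resolve_right hΓo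
  have hcomm : Commute (A * Γ) (diagonal d) :=
    hd ▸ commute_mul_map_conj_mul_of_isConinvolutory hΓ hA hB
  have hA_col (j : n) (hj : j ≠ o) : A j o = 0 := by
    have hmul := apply_eq_zero_of_commute_diagonal hcomm (hne j hj)
    rw [mul_apply_of_forall_ne_eq_zero hcol] at hmul
    exact (mul_eq_zero.mp hmul).resolve_right hΓo
  have hA_norm : ‖A o o‖ = 1 := hA.norm_apply_self_eq_one hA_col
  have hB_norm : ‖Γ⁻¹ o o + A o o‖ = 1 :=
    hB.norm_apply_self_eq_one fun j hj ↦ by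
      rw [Matrix.add_apply, hinv_col j hj, hA_col j hj, add_zero]
  have hinv_norm : ‖Γ⁻¹ o o‖ ≤ 2 := by
    calc ‖Γ⁻¹ o o‖ = ‖(Γ⁻¹ o o + A o o) - A o o‖ := by rw [add_sub_cancel_right]
      _ ≤ ‖Γ⁻¹ o o + A o o‖ + ‖A o o‖ := norm_sub_le _ _
      _ = 2 := by rw [hA_norm, hB_norm, one_add_one_eq_two]
  have hnorm_mul : ‖Γ⁻¹ o o‖ * ‖Γ o o‖ = 1 := by rw [← norm_mul, hinv_self, norm_one]
  nlinarith [norm_nonneg (Γ o o)]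

end Coninvolutory

section Monomial

variable {n R : Type*} [DecidableEq n]

/-- The monomial (generalized permutation) matrix whose row `i` has its only possibly nonzero
entry `c i` in column `σ i`. -/
def monomialMatrix [Zero R] (σ : n → n) (c : n → R) : Matrix n n R :=
  of fun i j ↦ if j = σ i then c i else 0

theorem monomialMatrix_id [Zero R] (c : n → R) : monomialMatrix id c = diagonal c := by
  ext i j
  simp [monomialMatrix, diagonal_apply, eq_comm]

theorem map_monomialMatrix {S F : Type*} [Zero R] [Zero S] [FunLike F R S] [ZeroHomClass F R S]
    (f : F) (σ : n → n) (c : n → R) :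
    (monomialMatrix σ c).map f = monomialMatrix σ (f ∘ c) := by
  ext i j
  simp only [monomialMatrix, map_apply, of_apply, apply_ite f, map_zero, Function.comp_apply]

theorem monomialMatrix_mul [Fintype n] [NonUnitalNonAssocSemiring R] (σ τ : n → n) (b c : n → R) :
    monomialMatrix σ b * monomialMatrix τ c =
      monomialMatrix (τ ∘ σ) fun i ↦ b i * c (σ i) := by
  ext i j
  rw [mul_apply, Fintype.sum_eq_single (σ i) fun k hk ↦ by simp [monomialMatrix, hk]]
  simp [monomialMatrix]

theorem isUnit_monomialMatrix [Fintype n] [CommRing R] (σ : Equiv.Perm n) {c : n → R}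
    (hc : ∀ i, IsUnit (c i)) : IsUnit (monomialMatrix σ c) := by
  refine IsUnit.of_mul_eq_one (monomialMatrix σ.symm fun i ↦ Ring.inverse (c (σ.symm i))) ?_
  rw [monomialMatrix_mul, Equiv.symm_comp_self, monomialMatrix_id]
  simp only [Equiv.symm_apply_apply, Ring.mul_inverse_cancel _ (hc _), diagonal_one]

end Monomial

theorem stmt_16_general {n 𝕜 : Type*} [Fintype n] [DecidableEq n] [RCLike 𝕜] {σ : n → n}
    (hσ : Function.Involutive σ) {c : n → 𝕜} (hc : ∀ i, c i ≠ 0) {o : n} (ho : σ o = o)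
    (hnorm : ‖c o‖ < 1 / 2) (hne : ∀ j, j ≠ o → conj (c j) * c (σ j) ≠ conj (c o) * c (σ o)) :
    IsUnit (monomialMatrix σ c) ∧
      ¬ ∃ A : Matrix n n 𝕜,
        IsConinvolutory A ∧ IsConinvolutory ((monomialMatrix σ c)⁻¹ + A) := by
  have hunit : IsUnit (monomialMatrix σ c) :=
    isUnit_monomialMatrix (hσ.toPerm σ) fun i ↦ (hc i).isUnit
  have hdiag : (monomialMatrix σ c).map (starRingEnd 𝕜) * monomialMatrix σ c =
      diagonal fun i ↦ conj (c i) * c (σ i) := by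
    rw [map_monomialMatrix, monomialMatrix_mul, hσ.comp_self, monomialMatrix_id]
    rfl
  have hcol (j : n) (hj : j ≠ o) : monomialMatrix σ c j o = 0 :=
    if_neg fun h ↦ hj (hσ.injective (h.symm.trans ho.symm))
  have hentry : monomialMatrix σ c o o = c o := if_pos ho.symm
  exact ⟨hunit, not_exists_isConinvolutory_inv_add hunit hdiag hcol hne (hentry ▸ hnorm)⟩

section BlockSwap

variable {m s : ℕ}

/-- The involution underlying the Bishop matrix: it fixes the first `m` (elliptic and hyperbolic)
indices and exchanges the two following blocks of length `s`. -/
def blockSwap (m s : ℕ) (i : Fin (m + 2 * s)) : Fin (m + 2 * s) :=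
  ⟨if (i : ℕ) < m then i else if (i : ℕ) < m + s then i + s else i - s, by split_ifs <;> omega⟩

theorem blockSwap_involutive (m s : ℕ) : Function.Involutive (blockSwap m s) := by
  intro i
  ext
  simp only [blockSwap]
  split_ifs <;> omega

theorem blockSwap_of_lt {i : Fin (m + 2 * s)} (hi : (i : ℕ) < m) : blockSwap m s i = i :=
  Fin.ext (if_pos hi)

theorem eq_monomialMatrix_blockSwap {R : Type*} [Zero R]
    {Γ : Matrix (Fin (m + 2 * s)) (Fin (m + 2 * s)) R} {c : Fin (m + 2 * s) → R}
    (hfix : ∀ i : Fin (m + 2 * s), (i : ℕ) + 1 ≤ m → ∀ j, Γ i j = if j = i then c i else 0)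
    (hup : ∀ i : Fin (m + 2 * s), m < (i : ℕ) + 1 → (i : ℕ) + 1 ≤ m + s →
      ∀ j : Fin (m + 2 * s), Γ i j = if (j : ℕ) = i + s then c i else 0)
    (hdown : ∀ i : Fin (m + 2 * s), m + s < (i : ℕ) + 1 →
      ∀ j : Fin (m + 2 * s), Γ i j = if (j : ℕ) + s = i then c i else 0) :
    Γ = monomialMatrix (blockSwap m s) c := by
  ext i j
  simp only [monomialMatrix, blockSwap, of_apply, Fin.ext_iff]
  split_ifs <;> grind

theorem apply_succ_ne_zero_of_blocks {R : Type*} [CommRing R] [StarRing R]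
    {γ : ℕ → R} (hfix : ∀ j, 1 ≤ j → j ≤ m → γ j ≠ 0)
    (hup : ∀ k, m < k → k ≤ m + s → γ k ≠ 0 ∧ γ k ≠ 1)
    (hpair : ∀ k, m < k → k ≤ m + s → γ (k + s) = 1 - conj (γ k)) (i : Fin (m + 2 * s)) :
    γ (i + 1) ≠ 0 := by
  rcases lt_or_ge (i : ℕ) m with hi | hi
  · exact hfix _ (by omega) hi
  rcases lt_or_ge (i : ℕ) (m + s) with his | his
  · exact (hup _ (by omega) his).1
  · obtain ⟨k, hk⟩ : ∃ k, (i : ℕ) + 1 = k + s := ⟨i + 1 - s, by omega⟩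
    rw [hk, hpair k (by omega) (by omega), sub_ne_zero, ne_comm, map_ne_one_iff _ star_injective]
    exact (hup k (by omega) (by omega)).2

theorem conj_mul_apply_blockSwap {R : Type*} [CommRing R] [StarRing R]
    {γ β : ℕ → R} (hreal : ∀ j, 1 ≤ j → j ≤ m → conj (γ j) = γ j)
    (hfix : ∀ j, 1 ≤ j → j ≤ m → β j = γ j ^ 2)
    (hpair : ∀ k, m < k → k ≤ m + s → γ (k + s) = 1 - conj (γ k))
    (hswap : ∀ k, m < k → k ≤ m + s →
      β k = γ k * (1 - γ k) ∧ β (k + s) = conj (γ k) * (1 - conj (γ k)))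
    (i : Fin (m + 2 * s)) :
    conj (γ (i + 1)) * γ (blockSwap m s i + 1) = β (blockSwap m s i + 1) := by
  rcases lt_or_ge (i : ℕ) m with hi | hi
  · rw [blockSwap_of_lt hi, hreal _ (by omega) hi, hfix _ (by omega) hi, pow_two]
  rcases lt_or_ge (i : ℕ) (m + s) with his | his
  · have hval : (blockSwap m s i : ℕ) + 1 = i + 1 + s := by
      simp only [blockSwap, hi.not_gt, his, if_true, if_false]
      omega
    rw [hval, hpair _ (by omega) his, (hswap _ (by omega) his).2]
  · obtain ⟨k, hk⟩ : ∃ k, (i : ℕ) + 1 = k + s := ⟨i + 1 - s, by omega⟩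
    have hval : (blockSwap m s i : ℕ) + 1 = k := by
      simp only [blockSwap, hi.not_gt, his.not_gt, if_false]
      omega
    rw [hval, hk, hpair k (by omega) (by omega), (hswap k (by omega) (by omega)).1]
    simp only [map_sub, map_one, starRingEnd_self_apply, mul_comm]

end BlockSwap

/-- The elliptic obstruction to attaching a complex submanifold: with `e* ≥ 1` and Bishop
invariants `γ_j` of elliptic/hyperbolic/complex type whose associated products are pairwise
distinct, the Bishop matrix `Γ` is invertible and there is no matrix `A` with
`conj(A)·A = I` and `conj(Γ⁻¹+A)·(Γ⁻¹+A) = I`. Indices are 1-based via `γ ((i:ℕ)+1)` for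
`i : Fin p`. -/
theorem stmt_16 (estar hstar sstar : ℕ) (hestar : 1 ≤ estar) (p : ℕ)
    (hp : p = estar + hstar + 2 * sstar)
    (γ β : ℕ → ℂ)
    (hγe : ∀ e, 1 ≤ e → e ≤ estar → (γ e).im = 0 ∧ 0 < (γ e).re ∧ (γ e).re < 1 / 2)
    (hγh : ∀ h, estar < h → h ≤ estar + hstar → (γ h).im = 0 ∧ 1 / 2 < (γ h).re)
    (hγs : ∀ s, estar + hstar < s → s ≤ p - sstar → 1 / 2 < (γ s).re ∧ 0 < (γ s).im)
    (hγss : ∀ s, estar + hstar < s → s ≤ p - sstar →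
      γ (s + sstar) = 1 - (starRingEnd ℂ) (γ s))
    (hβeh : ∀ j, 1 ≤ j → j ≤ estar + hstar → β j = γ j ^ 2)
    (hβs : ∀ s, estar + hstar < s → s ≤ p - sstar →
      β s = γ s * (1 - γ s) ∧
      β (s + sstar) = (starRingEnd ℂ) (γ s) * (1 - (starRingEnd ℂ) (γ s)))
    (hdist : ∀ i j, 1 ≤ i → i ≤ p → 1 ≤ j → j ≤ p → i ≠ j → β i ≠ β j)
    (Γ : Matrix (Fin p) (Fin p) ℂ)
    (hΓeh : ∀ i : Fin p, (i : ℕ) + 1 ≤ estar + hstar →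
      ∀ j : Fin p, Γ i j = if j = i then γ ((i : ℕ) + 1) else 0)
    (hΓs : ∀ i : Fin p, estar + hstar < (i : ℕ) + 1 → (i : ℕ) + 1 ≤ p - sstar →
      ∀ j : Fin p, Γ i j = if (j : ℕ) = (i : ℕ) + sstar then γ ((i : ℕ) + 1) else 0)
    (hΓss : ∀ i : Fin p, p - sstar < (i : ℕ) + 1 →
      ∀ j : Fin p, Γ i j = if (j : ℕ) + sstar = (i : ℕ) then γ ((i : ℕ) + 1) else 0) :
    IsUnit Γ ∧
    ¬ ∃ A : Matrix (Fin p) (Fin p) ℂ,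
      A.map (starRingEnd ℂ) * A = 1 ∧
      (Γ⁻¹ + A).map (starRingEnd ℂ) * (Γ⁻¹ + A) = 1 := by
  have hps : p - sstar = estar + hstar + sstar := by omega
  rw [hps] at hγs hγss hβs hΓs hΓss
  subst hp
  have hreal : ∀ j, 1 ≤ j → j ≤ estar + hstar → 0 < (γ j).re ∧ conj (γ j) = γ j := by
    intro j hj1 hj
    rw [Complex.conj_eq_iff_im]
    rcases le_or_gt j estar with he | hh
    · exact ⟨(hγe j hj1 he).2.1, (hγe j hj1 he).1⟩
    · exact ⟨one_half_pos.trans (hγh j hh hj).2, (hγh j hh hj).1⟩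
  have hne_zero : ∀ i : Fin (estar + hstar + 2 * sstar), γ (i + 1) ≠ 0 :=
    apply_succ_ne_zero_of_blocks (fun j hj1 hj h ↦ by simpa [h] using (hreal j hj1 hj).1)
      (fun k hk1 hk ↦ ⟨fun h ↦ by simpa [h] using (hγs k hk1 hk).2,
        fun h ↦ by simpa [h] using (hγs k hk1 hk).2⟩) hγss
  have hβ := conj_mul_apply_blockSwap (fun j hj1 hj ↦ (hreal j hj1 hj).2) hβeh hγss hβs
  have hnorm : ‖γ 1‖ < 1 / 2 := by
    obtain ⟨him, hpos, hlt⟩ := hγe 1 le_rfl hestar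
    rwa [← Complex.abs_re_eq_norm.mpr him, abs_of_pos hpos]
  rw [eq_monomialMatrix_blockSwap (c := fun i ↦ γ (i + 1)) hΓeh hΓs hΓss]
  refine stmt_16_general (blockSwap_involutive _ _) hne_zero (o := ⟨0, by omega⟩)
    (blockSwap_of_lt (by simpa using by omega)) hnorm fun j hj ↦ ?_
  rw [hβ, hβ]
  have hswap := Fin.val_ne_of_ne ((blockSwap_involutive _ _).injective.ne hj)
  exact hdist _ _ (by omega) (by omega) (by omega) (by omega) (by omega)
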